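/- Regular hyperlanguages are closed under complementation: for every NFH 𝓐 over Σ with k word variables, the NFH 𝓐̄ obtained by replacing the quantification condition α with its dual ᾱ (swapping every ∃ with ∀ and vice versa) and replacing the underlying NFA Â with an NFA accepting the complement of L(Â) over the alphabet (Σ ∪ {#})ᵏ satisfies: a nonempty hyperword S over Σ is in 𝓛(𝓐̄) if and only if S is not in 𝓛(𝓐). -/

import Mathlib

/-- The length of the longest word in a `k`-tuple of words. -/
def maxLen {α : Type} {k : ℕ} (v : Fin k → List α) : ℕ :=
  Finset.univ.sup fun i => (v i).length

/-- `zip` of a `k`-tuple of words over `α`: the word over `k`-tuples of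
`Option α`, where `none` plays the role of the padding symbol `#`. Its length
is the length of the longest word, and its `j`-th letter has `i`-th component
the `j`-th letter of the `i`-th word (or `#` = `none` if that word has ended). -/
def zipWord {α : Type} {k : ℕ} (v : Fin k → List α) : List (Fin k → Option α) :=
  (List.range (maxLen v)).map fun j i => (v i)[j]?

/-- A nondeterministic finite hyperautomaton (NFH) with `k` word variables:
an NFA over the alphabet of `k`-tuples `(Σ ∪ {#})ᵏ` together with a
quantification condition, where the `i`-th quantifier binds the `i`-th
variable (`true` = ∃, `false` = ∀). -/
structure NFH (α σ : Type) (k : ℕ) where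
  quant : Fin k → Bool
  aut : NFA (Fin k → Option α) σ

/-- Satisfaction of the suffix `𝔔ᵢ₊₁xᵢ₊₁ ⋯ 𝔔ₖxₖ` of the quantification
condition by a hyperword `S`, given a partial assignment `v` to the first `i`
variables: when all variables are assigned, the underlying NFA must accept the
zip of the assignment. -/
def NFH.SatFrom {α σ : Type} {k : ℕ} (A : NFH α σ k) (S : Set (List α)) :
    ℕ → (Fin k → List α) → Prop
  | i, v =>
    if h : i < k then
      if A.quant ⟨i, h⟩ then
        ∃ w ∈ S, A.SatFrom S (i + 1) (Function.update v ⟨i, h⟩ w)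
      else
        ∀ w ∈ S, A.SatFrom S (i + 1) (Function.update v ⟨i, h⟩ w)
    else
      zipWord v ∈ A.aut.accepts
  termination_by i _ => k - i
  decreasing_by all_goals omega

/-- A hyperword `S` is accepted by the NFH `A` if it satisfies the full
quantification condition of `A`. -/
def NFH.Accepts {α σ : Type} {k : ℕ} (A : NFH α σ k) (S : Set (List α)) : Prop :=
  A.SatFrom S 0 fun _ => []

/-- The hyperlanguage of an NFH: the set of all nonempty hyperwords it accepts. -/
def NFH.hyperLang {α σ : Type} {k : ℕ} (A : NFH α σ k) : Set (Set (List α)) :=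
  { S | S.Nonempty ∧ A.Accepts S }

/-!
Evaluate both automata along the quantifier prefix. By De Morgan, a negation in front of `∃ w ∈ S`
moves inside as `∀ w ∈ S`, and conversely, so it passes through the whole dual prefix until only
the underlying NFAs remain; these disagree on the zip of every assignment.
-/

namespace NFH

variable {α σ σ' : Type} {k : ℕ}

section Unfolding

variable {A : NFH α σ k} {S : Set (List α)} {v : Fin k → List α}

theorem satFrom_of_le {i : ℕ} (hi : k ≤ i) :
    A.SatFrom S i v ↔ zipWord v ∈ A.aut.accepts := by
  rw [SatFrom, dif_neg hi.not_gt]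

theorem satFrom_of_quant_eq_true {i : Fin k} (hi : A.quant i = true) :
    A.SatFrom S i v ↔ ∃ w ∈ S, A.SatFrom S (i + 1) (Function.update v i w) := by
  rw [SatFrom, dif_pos i.isLt, if_pos hi]

theorem satFrom_of_quant_eq_false {i : Fin k} (hi : A.quant i = false) :
    A.SatFrom S i v ↔ ∀ w ∈ S, A.SatFrom S (i + 1) (Function.update v i w) := by
  rw [SatFrom, dif_pos i.isLt, if_neg (Bool.eq_false_iff.mp hi)]

end Unfolding

theorem satFrom_iff_not_satFrom_of_dual {A : NFH α σ k} {B : NFH α σ' k}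
    (hquant : ∀ i, B.quant i = !A.quant i)
    (haut : ∀ v, zipWord v ∈ B.aut.accepts ↔ zipWord v ∉ A.aut.accepts)
    (S : Set (List α)) (i : ℕ) (v : Fin k → List α) :
    B.SatFrom S i v ↔ ¬ A.SatFrom S i v := by
  induction i, v using SatFrom.induct (A := A) with
  | case1 i v hi hA ih =>
    have hB : B.quant ⟨i, hi⟩ = false := by rw [hquant, hA, Bool.not_true]
    calc B.SatFrom S i v
      _ ↔ ∀ w ∈ S, B.SatFrom S (i + 1) (Function.update v ⟨i, hi⟩ w) :=
        satFrom_of_quant_eq_false hB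
      _ ↔ ∀ w ∈ S, ¬ A.SatFrom S (i + 1) (Function.update v ⟨i, hi⟩ w) :=
        forall₂_congr fun w _ => ih w
      _ ↔ ¬ ∃ w ∈ S, A.SatFrom S (i + 1) (Function.update v ⟨i, hi⟩ w) := by
        simp only [not_exists, not_and]
      _ ↔ ¬ A.SatFrom S i v := not_congr (satFrom_of_quant_eq_true hA).symm
  | case2 i v hi hA ih =>
    have hA : A.quant ⟨i, hi⟩ = false := Bool.eq_false_iff.mpr hA
    have hB : B.quant ⟨i, hi⟩ = true := by rw [hquant, hA, Bool.not_false]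
    calc B.SatFrom S i v
      _ ↔ ∃ w ∈ S, B.SatFrom S (i + 1) (Function.update v ⟨i, hi⟩ w) :=
        satFrom_of_quant_eq_true hB
      _ ↔ ∃ w ∈ S, ¬ A.SatFrom S (i + 1) (Function.update v ⟨i, hi⟩ w) :=
        exists_congr fun w => and_congr_right fun _ => ih w
      _ ↔ ¬ ∀ w ∈ S, A.SatFrom S (i + 1) (Function.update v ⟨i, hi⟩ w) := by
        simp only [not_forall, exists_prop]
      _ ↔ ¬ A.SatFrom S i v := not_congr (satFrom_of_quant_eq_false hA).symm
  | case3 i v hi =>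
    rw [satFrom_of_le (not_lt.mp hi), satFrom_of_le (not_lt.mp hi)]
    exact haut v

theorem mem_hyperLang_iff_accepts {A : NFH α σ k} {S : Set (List α)} (hS : S.Nonempty) :
    S ∈ A.hyperLang ↔ A.Accepts S :=
  and_iff_right hS

end NFH

theorem nfh_closure_complementation_general {α σ σ' : Type} {k : ℕ}
    (A : NFH α σ k) (B : NFH α σ' k)
    (hquant : ∀ i : Fin k, B.quant i = !A.quant i)
    (haut : ∀ v : Fin k → List α, zipWord v ∈ B.aut.accepts ↔ zipWord v ∉ A.aut.accepts)
    (S : Set (List α)) (hS : S.Nonempty) :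
    S ∈ B.hyperLang ↔ S ∉ A.hyperLang := by
  rw [NFH.mem_hyperLang_iff_accepts hS, NFH.mem_hyperLang_iff_accepts hS]
  exact NFH.satFrom_iff_not_satFrom_of_dual hquant haut S 0 fun _ => []

/-- **Closure under complementation.** If `B` is obtained from the NFH `A` by
dualizing the quantification condition (swapping ∃ and ∀) and replacing the
underlying NFA by one accepting the complement of its language over
`(Σ ∪ {#})ᵏ`, then a nonempty hyperword is in `𝓛(B)` iff it is not in `𝓛(A)`. -/
theorem nfh_closure_complementation {α σ σ' : Type} {k : ℕ}
    (A : NFH α σ k) (B : NFH α σ' k)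
    (hquant : ∀ i : Fin k, B.quant i = !A.quant i)
    (haut : ∀ w : List (Fin k → Option α), w ∈ B.aut.accepts ↔ w ∉ A.aut.accepts)
    (S : Set (List α)) (hS : S.Nonempty) :
    S ∈ B.hyperLang ↔ S ∉ A.hyperLang := by
  exact nfh_closure_complementation_general A B hquant (fun v => haut (zipWord v)) S hS
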